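/- Suppose {q_0, …, q_{N−1}} is a strongly proper interpolation basis for the Birkhoff functionals L_1, …, L_N. Then for every k with 1 ≤ k ≤ N, the interpolation polynomials satisfy the recursion p_{k−1} = p_{k−2} + ((y_k − L_k(p_{k−2})) / L_k(g_{k−2,k−1})) · g_{k−2,k−1}, where the denominator L_k(g_{k−2,k−1}) is nonzero (for k = 1 the conventions p_{−1} = 0 and g_{−1,0} = q_0 apply). -/

import Mathlib

open Polynomial Matrix

/-- The matrix `V_{k-1}` whose `(i,j)` entry is `L i (q j)`, for the first `k`
functionals and polynomials. -/
noncomputable def Vmat {N : ℕ} (L : Fin N → (Polynomial ℝ →ₗ[ℝ] ℝ)) (q : Fin N → Polynomial ℝ)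
    (k : ℕ) (hk : k ≤ N) : Matrix (Fin k) (Fin k) ℝ :=
  Matrix.of fun i j => L (Fin.castLE hk i) (q (Fin.castLE hk j))

/-- The auxiliary polynomial `g_{m-1, k}` (so `gAux L q m hm k` uses the first `m`
interpolation conditions; `gAux L q 0 _ k = q k` is the convention `g_{-1,k} = q k`). -/
noncomputable def gAux {N : ℕ} (L : Fin N → (Polynomial ℝ →ₗ[ℝ] ℝ)) (q : Fin N → Polynomial ℝ)
    (m : ℕ) (hm : m ≤ N) (k : Fin N) : Polynomial ℝ :=
  q k - ∑ i : Fin m,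
    (((Vmat L q m hm)⁻¹ *ᵥ fun i : Fin m => L (Fin.castLE hm i) (q k)) i) • q (Fin.castLE hm i)

/-- The interpolation polynomial `p_{k-1}` for the first `k` conditions and values `y`;
`pInterp L q y 0 _ = 0` is the convention `p_{-1} = 0`. -/
noncomputable def pInterp {N : ℕ} (L : Fin N → (Polynomial ℝ →ₗ[ℝ] ℝ)) (q : Fin N → Polynomial ℝ)
    (y : Fin N → ℝ) (k : ℕ) (hk : k ≤ N) : Polynomial ℝ :=
  ∑ j : Fin k,
    (((Vmat L q k hk)⁻¹ *ᵥ fun i : Fin k => y (Fin.castLE hk i)) j) • q (Fin.castLE hk j)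

/-!
An invertible collocation matrix makes an element of the span of the `q j` determined by its
values at the functionals. Let `g` be the error of interpolating the last `q` by the earlier ones.
The element `e` of the full span with last value `1` and all earlier values `0` differs from a
multiple `c • g` by an element of the smaller span at which the earlier functionals vanish, so
`e = c • g` and the last value of `g` is a unit with inverse `c`. Adding a multiple of `g` to the
previous interpolant therefore preserves the earlier values and can correct the last one, and by
uniqueness the result is the next interpolant.
-/

section CommRing

variable {ι R M : Type*} [CommRing R] [AddCommGroup M] [Module R M]

/-- The collocation matrix `(L i (q j))` of functionals `L` and elements `q`; it is the matrix of
the linear system that expresses interpolation by combinations of the `q j`. -/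
def collocationMatrix (L : ι → Module.Dual R M) (q : ι → M) : Matrix ι ι R :=
  of fun i j => L i (q j)

variable [Fintype ι]

theorem apply_linearCombination (L : ι → Module.Dual R M) (q : ι → M) (c : ι → R) (i : ι) :
    L i (Fintype.linearCombination R q c) = (collocationMatrix L q *ᵥ c) i := by
  simp [Fintype.linearCombination_apply, collocationMatrix, mulVec, dotProduct, mul_comm]

variable [DecidableEq ι]

/-- The combination of the `q j` that interpolates the values `y` at the functionals `L`. It is
meaningful only for an invertible collocation matrix, since otherwise the matrix inverse is `0`. -/
noncomputable def interpolant (L : ι → Module.Dual R M) (q : ι → M) (y : ι → R) : M :=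
  Fintype.linearCombination R q ((collocationMatrix L q)⁻¹ *ᵥ y)

/-- The error `x - p` of the interpolant `p` of the values `L i x`. -/
noncomputable def interpolationError (L : ι → Module.Dual R M) (q : ι → M) (x : M) : M :=
  x - interpolant L q fun i => L i x

theorem interpolant_mem_span (L : ι → Module.Dual R M) (q : ι → M) (y : ι → R) :
    interpolant L q y ∈ Submodule.span R (Set.range q) := by
  rw [← Fintype.range_linearCombination]
  exact LinearMap.mem_range_self _ _

variable {L : ι → Module.Dual R M} {q : ι → M}

theorem apply_interpolant (hV : IsUnit (collocationMatrix L q).det) (y : ι → R) (i : ι) :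
    L i (interpolant L q y) = y i := by
  rw [interpolant, apply_linearCombination, mulVec_mulVec, mul_nonsing_inv _ hV, one_mulVec]

theorem eq_interpolant_of_mem_span (hV : IsUnit (collocationMatrix L q).det) {x : M} {y : ι → R}
    (hx : x ∈ Submodule.span R (Set.range q)) (hy : ∀ i, L i x = y i) :
    x = interpolant L q y := by
  rw [← Fintype.range_linearCombination] at hx
  obtain ⟨c, rfl⟩ := hx
  have hc : collocationMatrix L q *ᵥ c = y :=
    funext fun i => (apply_linearCombination L q c i).symm.trans (hy i)
  rw [interpolant, ← hc, mulVec_mulVec, nonsing_inv_mul _ hV, one_mulVec]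

theorem eq_zero_of_mem_span (hV : IsUnit (collocationMatrix L q).det) {x : M}
    (hx : x ∈ Submodule.span R (Set.range q)) (h : ∀ i, L i x = 0) : x = 0 :=
  (eq_interpolant_of_mem_span hV hx (y := 0) h).trans
    (eq_interpolant_of_mem_span hV (zero_mem _) fun _ => map_zero _).symm

theorem apply_interpolationError (hV : IsUnit (collocationMatrix L q).det) (x : M) (i : ι) :
    L i (interpolationError L q x) = 0 := by
  rw [interpolationError, map_sub, apply_interpolant hV, sub_self]

theorem isUnit_apply_interpolationError_last {m : ℕ} {L : Fin (m + 1) → Module.Dual R M}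
    {q : Fin (m + 1) → M} (hV : IsUnit (collocationMatrix L q).det)
    (hV' : IsUnit (collocationMatrix (L ∘ Fin.castSucc) (q ∘ Fin.castSucc)).det) :
    IsUnit (L (Fin.last m)
      (interpolationError (L ∘ Fin.castSucc) (q ∘ Fin.castSucc) (q (Fin.last m)))) := by
  set g := interpolationError (L ∘ Fin.castSucc) (q ∘ Fin.castSucc) (q (Fin.last m)) with hg
  let e := interpolant L q (Pi.single (Fin.last m) 1)
  have hLe (i : Fin (m + 1)) : L i e = Pi.single (M := fun _ => R) (Fin.last m) 1 i :=
    apply_interpolant hV _ i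
  obtain ⟨c, hc⟩ : ∃ c : R, e - c • g ∈ Submodule.span R (Set.range (q ∘ Fin.castSucc)) := by
    have hq : Set.range q = insert (q (Fin.last m)) (Set.range (q ∘ Fin.castSucc)) :=
      (congrArg Set.range (Fin.snoc_init_self q).symm).trans (Fin.range_snoc _ _)
    have he_mem : e ∈ Submodule.span R (Set.range q) := interpolant_mem_span L q _
    rw [hq] at he_mem
    obtain ⟨c, r, hr, he_eq⟩ := Submodule.mem_span_insert.mp he_mem
    refine ⟨c, ?_⟩
    rw [he_eq, hg, interpolationError, smul_sub, add_sub_sub_cancel]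
    exact add_mem hr (Submodule.smul_mem _ c (interpolant_mem_span _ _ _))
  have he : e = c • g := sub_eq_zero.mp <| eq_zero_of_mem_span hV' hc fun i => by
    have hgi : L i.castSucc g = 0 := apply_interpolationError hV' _ i
    simp [hLe, hgi]
  refine IsUnit.of_mul_eq_one_right c ?_
  rw [← smul_eq_mul, ← map_smul, ← he, hLe, Pi.single_eq_same]

end CommRing

theorem birkhoff_interpolation_recursion_general {K M : Type*} [Field K] [AddCommGroup M]
    [Module K M] {m : ℕ} {L : Fin (m + 1) → Module.Dual K M} {q : Fin (m + 1) → M}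
    (hV : IsUnit (collocationMatrix L q).det)
    (hV' : IsUnit (collocationMatrix (L ∘ Fin.castSucc) (q ∘ Fin.castSucc)).det)
    (y : Fin (m + 1) → K) :
    let p := interpolant (L ∘ Fin.castSucc) (q ∘ Fin.castSucc) (y ∘ Fin.castSucc)
    let g := interpolationError (L ∘ Fin.castSucc) (q ∘ Fin.castSucc) (q (Fin.last m))
    L (Fin.last m) g ≠ 0 ∧
      interpolant L q y =
        p + ((y (Fin.last m) - L (Fin.last m) p) / L (Fin.last m) g) • g := by
  intro p g
  have hg : L (Fin.last m) g ≠ 0 := (isUnit_apply_interpolationError_last hV hV').ne_zero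
  refine ⟨hg, (eq_interpolant_of_mem_span hV ?_ fun i => ?_).symm⟩
  · have hle : Submodule.span K (Set.range (q ∘ Fin.castSucc)) ≤ Submodule.span K (Set.range q) :=
      Submodule.span_mono (Set.range_comp_subset_range _ q)
    have hp : p ∈ Submodule.span K (Set.range q) := hle (interpolant_mem_span _ _ _)
    have hg_mem : g ∈ Submodule.span K (Set.range q) :=
      sub_mem (Submodule.subset_span (Set.mem_range_self _)) (hle (interpolant_mem_span _ _ _))
    exact add_mem hp (Submodule.smul_mem _ _ hg_mem)
  · rw [map_add, map_smul, smul_eq_mul]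
    cases i using Fin.lastCases with
    | last => rw [div_mul_cancel₀ _ hg, add_sub_cancel]
    | cast i =>
      have hpi : L i.castSucc p = y i.castSucc := apply_interpolant hV' _ i
      have hgi : L i.castSucc g = 0 := apply_interpolationError hV' _ i
      rw [hpi, hgi, mul_zero, add_zero]

/-- for a strongly proper interpolation basis `q` for Birkhoff functionals `L`,
the interpolation polynomials satisfy
`p_{k-1} = p_{k-2} + ((y_k - L_k p_{k-2}) / L_k g_{k-2,k-1}) • g_{k-2,k-1}`,
the denominator being nonzero. -/
theorem birkhoff_interpolation_recursion
    (N : ℕ) (hN : 1 ≤ N) (z : Fin N → ℝ) (α : Fin N → ℕ)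
    (L : Fin N → (Polynomial ℝ →ₗ[ℝ] ℝ))
    (hL : ∀ (i : Fin N) (p : Polynomial ℝ),
      L i p = Polynomial.eval (z i) (Polynomial.derivative^[α i] p))
    (q : Fin N → Polynomial ℝ)
    (hq : ∀ (k : ℕ) (hk : k ≤ N), IsUnit (Vmat L q k hk).det)
    (y : Fin N → ℝ) :
    ∀ (k : ℕ) (hk1 : 1 ≤ k) (hk : k ≤ N),
      L ⟨k - 1, by omega⟩ (gAux L q (k - 1) (by omega) ⟨k - 1, by omega⟩) ≠ 0 ∧
      pInterp L q y k hk =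
        pInterp L q y (k - 1) (by omega) +
          ((y ⟨k - 1, by omega⟩ - L ⟨k - 1, by omega⟩ (pInterp L q y (k - 1) (by omega))) /
              L ⟨k - 1, by omega⟩ (gAux L q (k - 1) (by omega) ⟨k - 1, by omega⟩)) •
            gAux L q (k - 1) (by omega) ⟨k - 1, by omega⟩ := by
  rintro (_ | m) hk1 hk
  · omega
  -- `Vmat`, `gAux` and `pInterp` unfold to `collocationMatrix`, `interpolationError` and
  -- `interpolant` of the families restricted along `Fin.castLE`.
  · exact birkhoff_interpolation_recursion_general (hq (m + 1) hk) (hq m (by omega))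
      (y ∘ Fin.castLE hk)
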